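/- (Proposition 3, decision-set disclosure.) Fix an integer K ≥ 2, reals ε_e > 0, Δ ≥ 0, ε_a with Δ/(1+Δ) < ε_a < 1, a threshold q ∈ (0,1), and a temperature T > 0. Define γ^out, γ^in as in the parameterization below and let μ^out, μ^in be the probability measures on S_K with densities f_{γ^out}, f_{γ^in}. Define the output distributions on {0,1}^K by ν^z(b) = ∫_{S_K} κ_{T,q}(p)(b) f_{γ^z}(p) dp for z ∈ {out, in}. Then for every subset B ⊆ {0,1}^K, ν^out(B) − ν^in(B) ≤ δ_{T,q} · Adv^CV-ub(Δ, ε_a, ε_e, K). -/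

import Mathlib

open MeasureTheory

/-- The open standard simplex `S_K` in coordinates `(p_0, …, p_{K-2}) ∈ ℝ^{K-1}`:
all coordinates positive and their sum less than 1 (so that `p_{K-1} = 1 - Σ` is positive). -/
def simplexCoords (K : ℕ) : Set (Fin (K - 1) → ℝ) :=
  {x | (∀ i, 0 < x i) ∧ ∑ i, x i < 1}

/-- The full probability vector `p ∈ ℝ^K` obtained from the coordinates
`(p_0, …, p_{K-2})`, with `p_{K-1} = 1 - Σ_{k < K-1} p_k`. -/
noncomputable def fullProb (K : ℕ) (x : Fin (K - 1) → ℝ) : Fin K → ℝ :=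
  fun k => if h : (k : ℕ) < K - 1 then x ⟨k, h⟩ else 1 - ∑ i, x i

/-- Multivariate Beta function `B(γ) = (∏ₖ Γ(γₖ)) / Γ(Σₖ γₖ)`. -/
noncomputable def multiBeta {K : ℕ} (γ : Fin K → ℝ) : ℝ :=
  (∏ i, Real.Gamma (γ i)) / Real.Gamma (∑ i, γ i)

/-- Dirichlet density `f_γ(p) = (1/B(γ)) ∏ₖ pₖ^(γₖ - 1)` in simplex coordinates. -/
noncomputable def dirichletPdf {K : ℕ} (γ : Fin K → ℝ) (x : Fin (K - 1) → ℝ) : ℝ :=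
  (1 / multiBeta γ) * ∏ k, (fullProb K x k) ^ (γ k - 1)

/-- Digamma function `ψ(x) = Γ'(x)/Γ(x)`. -/
noncomputable def digamma (x : ℝ) : ℝ := deriv Real.Gamma x / Real.Gamma x

/-- Dirichlet parameters for the model trained *without* the target point. -/
noncomputable def gammaOut (K : ℕ) (epsE epsA : ℝ) : Fin K → ℝ := fun k =>
  if (k : ℕ) = 0 then (1 - epsA) / epsE else epsA / (((K : ℝ) - 1) * epsE)

/-- Dirichlet parameters for the model trained *with* the target point. -/
noncomputable def gammaIn (K : ℕ) (epsE Δ epsA : ℝ) : Fin K → ℝ := fun k =>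
  if (k : ℕ) = 0 then (1 + Δ) * (1 - epsA) / epsE
  else (epsA * (1 + Δ) - Δ) / (((K : ℝ) - 1) * epsE)

/-- The upper bound on the attacker's advantage under confidence-vector disclosure. -/
noncomputable def AdvCVub (Δ epsA epsE : ℝ) (K : ℕ) : ℝ :=
  Real.sqrt ((Δ * (1 - epsA) / epsE) *
    (digamma ((1 + Δ) * (1 - epsA) / epsE) - digamma ((1 - epsA) / epsE)
      + digamma (epsA / (((K : ℝ) - 1) * epsE))
      - digamma ((epsA * (1 + Δ) - Δ) / (((K : ℝ) - 1) * epsE))))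

/-- Tempered sigmoid `σ_T(x) = 1/(1 + e^{-x/T})`. -/
noncomputable def sigmaT (T x : ℝ) : ℝ := 1 / (1 + Real.exp (-x / T))

/-- Randomized decision-set channel: the probability of producing the bit vector
`b ∈ {0,1}^K` given the confidence vector `p`:
`κ_{T,q}(p)(b) = ∏ₖ σ_T((2 bₖ - 1)(pₖ - q))`. -/
noncomputable def dsKernel (K : ℕ) (T q : ℝ) (p : Fin K → ℝ) (b : Fin K → Bool) : ℝ :=
  ∏ k, sigmaT T ((2 * (if b k then (1 : ℝ) else 0) - 1) * (p k - q))

/-- The open standard simplex of full probability vectors in `ℝ^K`. -/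
def probSimplex (K : ℕ) : Set (Fin K → ℝ) :=
  {p | (∀ k, 0 < p k) ∧ ∑ k, p k = 1}

/-- Squared proportionality factor `δ_{T,q}²`: the Dobrushin coefficient of the
randomized decision-set channel over the simplex. -/
noncomputable def deltaSq (K : ℕ) (T q : ℝ) : ℝ :=
  ⨆ (p : probSimplex K) (p' : probSimplex K),
    1 / 2 * ∑ b : Fin K → Bool, |dsKernel K T q p b - dsKernel K T q p' b|

/-!
A channel with Dobrushin coefficient `D` changes the probability of an event by at most `D / 2`
times the `L¹` distance of the input densities `f` and `g`. Since the logarithmic mean is at most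
the arithmetic mean, `2 (f - g)² ≤ (f + g) (f - g) log (f / g)`, and Cauchy–Schwarz bounds this
`L¹` distance by the square root of the Jeffreys divergence `KL(f‖g) + KL(g‖f)`.

For Dirichlet densities the divergence has a closed form. The normalization `B(γ)` expresses that
the kernels `t ^ (a - 1) / Γ(a)` form a convolution semigroup. It follows that `∑ₖ ηₖ log pₖ` has
moment generating function `B(γ + t η) / B(γ)`, whose derivative at `0` gives the expectation of
the log-likelihood ratio in terms of the digamma function. For the parameters of the theorem the
two total masses agree, and only the radicand of `AdvCVub` remains. Finally
`δ² / 2 ≤ δ` because `δ² ≤ 1`.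
-/

section Pinsker

theorem two_mul_sub_sq_le_add_mul_sub_mul_log {x y : ℝ} (hx : 0 < x) (hy : 0 < y) :
    2 * (x - y) ^ 2 ≤ (x + y) * ((x - y) * Real.log (x / y)) := by
  wlog hxy : y ≤ x generalizing x y
  · have h := this hy hx (le_of_not_ge hxy)
    rw [← inv_div, Real.log_inv] at h
    linarith
  have hlog : 2 * (x - y) / (x + y) ≤ Real.log (x / y) := by
    have h := Real.le_log_one_add_of_nonneg (x := x / y - 1) (by rwa [sub_nonneg, one_le_div hy])
    rw [add_sub_cancel] at h
    calc 2 * (x - y) / (x + y) = 2 * (x / y - 1) / (x / y - 1 + 2) := by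
          rw [show x / y - 1 = (x - y) / y by field_simp,
            show (x - y) / y + 2 = (x + y) / y by field_simp; ring]
          field_simp
      _ ≤ Real.log (x / y) := h
  rw [div_le_iff₀ (by positivity)] at hlog
  linarith [mul_le_mul_of_nonneg_left hlog (sub_nonneg.2 hxy)]

/-- The Jeffreys divergence `KL(f‖g) + KL(g‖f)` of the densities `f` and `g` with respect to `μ`,
written as a single integral. -/
noncomputable def jeffreysDiv {α : Type*} [MeasurableSpace α] (μ : Measure α) (f g : α → ℝ) : ℝ :=
  ∫ x, (f x - g x) * Real.log (f x / g x) ∂μ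

variable {α : Type*} [MeasurableSpace α] {μ : Measure α} {f g : α → ℝ}

-- Cauchy–Schwarz for `|f - g| = (|f - g| / √(f + g)) * √(f + g)`, in discriminant form.
theorem sq_integral_abs_sub_le_mul_jeffreysDiv (hf : Integrable f μ) (hg : Integrable g μ)
    (hf₀ : ∀ᵐ x ∂μ, 0 < f x) (hg₀ : ∀ᵐ x ∂μ, 0 < g x)
    (hfg : Integrable (fun x => (f x - g x) * Real.log (f x / g x)) μ) :
    (∫ x, |f x - g x| ∂μ) ^ 2 ≤ (∫ x, f x ∂μ + ∫ x, g x ∂μ) / 2 * jeffreysDiv μ f g := by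
  have habs : Integrable (fun x => |f x - g x|) μ := (hf.sub hg).abs
  have hsum : Integrable (fun x => f x + g x) μ := hf.add hg
  have hquad (c : ℝ) : 0 ≤ jeffreysDiv μ f g / 2 * (c * c) + -(2 * ∫ x, |f x - g x| ∂μ) * c +
      (∫ x, f x ∂μ + ∫ x, g x ∂μ) := by
    have hpt : ∀ᵐ x ∂μ, 0 ≤ c * c / 2 * ((f x - g x) * Real.log (f x / g x)) -
        2 * c * |f x - g x| + (f x + g x) := by
      filter_upwards [hf₀, hg₀] with x hfx hgx
      have h := two_mul_sub_sq_le_add_mul_sub_mul_log hfx hgx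
      rw [← sq_abs] at h
      refine (mul_nonneg_iff_of_pos_left (add_pos hfx hgx)).1 ?_
      nlinarith [mul_le_mul_of_nonneg_left h (mul_self_nonneg c),
        sq_nonneg (c * |f x - g x| - (f x + g x))]
    have hdiff : Integrable (fun x => c * c / 2 * ((f x - g x) * Real.log (f x / g x)) -
        2 * c * |f x - g x|) μ := (hfg.const_mul _).sub (habs.const_mul _)
    have hint := integral_nonneg_of_ae hpt
    rw [integral_add hdiff hsum,
      integral_sub (hfg.const_mul _) (habs.const_mul _), integral_const_mul, integral_const_mul,
      integral_add hf hg] at hint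
    rw [jeffreysDiv]
    linarith
  have hdiscrim := discrim_le_zero hquad
  rw [discrim] at hdiscrim
  linarith

theorem integral_abs_sub_le_sqrt_jeffreysDiv (hf₁ : ∫ x, f x ∂μ = 1) (hg₁ : ∫ x, g x ∂μ = 1)
    (hf₀ : ∀ᵐ x ∂μ, 0 < f x) (hg₀ : ∀ᵐ x ∂μ, 0 < g x)
    (hfg : Integrable (fun x => (f x - g x) * Real.log (f x / g x)) μ) :
    ∫ x, |f x - g x| ∂μ ≤ √(jeffreysDiv μ f g) := by
  have h := sq_integral_abs_sub_le_mul_jeffreysDiv (integrable_of_integral_eq_one hf₁)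
    (integrable_of_integral_eq_one hg₁) hf₀ hg₀ hfg
  rw [hf₁, hg₁] at h
  exact Real.le_sqrt_of_sq_le (by linarith)

end Pinsker

section Dobrushin

theorem sum_sub_sum_le_half_sum_abs_sub {β : Type*} [Fintype β] {v w : β → ℝ}
    (hvw : ∑ b, v b = ∑ b, w b) (B : Finset β) :
    ∑ b ∈ B, v b - ∑ b ∈ B, w b ≤ 1 / 2 * ∑ b, |v b - w b| := by
  classical
  have hcompl : ∑ b ∈ B, (v b - w b) = ∑ b ∈ Bᶜ, (w b - v b) := by
    have hv := Finset.sum_add_sum_compl B v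
    have hw := Finset.sum_add_sum_compl B w
    simp only [Finset.sum_sub_distrib]
    linarith
  have hB : ∑ b ∈ B, (v b - w b) ≤ ∑ b ∈ B, |v b - w b| :=
    Finset.sum_le_sum fun b _ => le_abs_self _
  have hBc : ∑ b ∈ Bᶜ, (w b - v b) ≤ ∑ b ∈ Bᶜ, |v b - w b| :=
    Finset.sum_le_sum fun b _ => abs_sub_comm (v b) (w b) ▸ le_abs_self _
  have habs := Finset.sum_add_sum_compl B fun b => |v b - w b|
  rw [← Finset.sum_sub_distrib]
  linarith

/-- The Dobrushin coefficient of a channel `κ` from `ι` to a finite alphabet: the largest total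
variation distance between two of its output distributions. -/
noncomputable def dobrushinCoeff {ι β : Type*} [Fintype β] (κ : ι → β → ℝ) : ℝ :=
  ⨆ (x : ι) (y : ι), 1 / 2 * ∑ b, |κ x b - κ y b|

variable {ι β : Type*} [Fintype β] {κ : ι → β → ℝ}

theorem dobrushinCoeff_nonneg : 0 ≤ dobrushinCoeff κ :=
  Real.iSup_nonneg fun _ => Real.iSup_nonneg fun _ => by positivity

theorem half_sum_abs_sub_le_one {v w : β → ℝ} (hv : v ∈ stdSimplex ℝ β)
    (hw : w ∈ stdSimplex ℝ β) : 1 / 2 * ∑ b, |v b - w b| ≤ 1 := by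
  have h : ∑ b, |v b - w b| ≤ ∑ b, (v b + w b) := Finset.sum_le_sum fun b _ =>
    abs_le.2 ⟨by linarith [hv.1 b], by linarith [hw.1 b]⟩
  rw [Finset.sum_add_distrib, hv.2, hw.2] at h
  linarith

theorem dobrushinCoeff_le_one (hκ : ∀ x, κ x ∈ stdSimplex ℝ β) : dobrushinCoeff κ ≤ 1 :=
  Real.iSup_le (fun x => Real.iSup_le (fun y => half_sum_abs_sub_le_one (hκ x) (hκ y))
    zero_le_one) zero_le_one

theorem dobrushinCoeff_div_two_le_sqrt (hκ : ∀ x, κ x ∈ stdSimplex ℝ β) :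
    dobrushinCoeff κ / 2 ≤ √(dobrushinCoeff κ) := by
  have h₀ := dobrushinCoeff_nonneg (κ := κ)
  have h₁ := dobrushinCoeff_le_one hκ
  exact Real.le_sqrt_of_sq_le (by nlinarith)

theorem half_sum_abs_sub_le_dobrushinCoeff (hκ : ∀ x, κ x ∈ stdSimplex ℝ β) (x y : ι) :
    1 / 2 * ∑ b, |κ x b - κ y b| ≤ dobrushinCoeff κ := by
  have hinner : BddAbove (Set.range fun y => 1 / 2 * ∑ b, |κ x b - κ y b|) :=
    ⟨1, Set.forall_mem_range.2 fun y => half_sum_abs_sub_le_one (hκ x) (hκ y)⟩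
  have houter : BddAbove (Set.range fun x => ⨆ y, 1 / 2 * ∑ b, |κ x b - κ y b|) :=
    ⟨1, Set.forall_mem_range.2 fun x =>
      Real.iSup_le (fun y => half_sum_abs_sub_le_one (hκ x) (hκ y)) zero_le_one⟩
  exact (le_ciSup hinner y).trans (le_ciSup houter x)

theorem sum_sub_sum_le_dobrushinCoeff (hκ : ∀ x, κ x ∈ stdSimplex ℝ β) (x y : ι)
    (B : Finset β) : ∑ b ∈ B, κ x b - ∑ b ∈ B, κ y b ≤ dobrushinCoeff κ :=
  (sum_sub_sum_le_half_sum_abs_sub ((hκ x).2.trans (hκ y).2.symm) B).trans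
    (half_sum_abs_sub_le_dobrushinCoeff hκ x y)

theorem exists_forall_abs_sub_le_half {ι : Type*} {φ : ι → ℝ} {D : ℝ}
    (hφ : ∀ x y, φ x - φ y ≤ D) : ∃ c, ∀ x, |φ x - c| ≤ D / 2 := by
  refine ⟨(⨅ y, φ y) + D / 2, fun x => ?_⟩
  have : Nonempty ι := ⟨x⟩
  have hle : ⨅ y, φ y ≤ φ x :=
    ciInf_le ⟨φ x - D, Set.forall_mem_range.2 fun y => by linarith [hφ x y]⟩ x
  have hge : φ x - D ≤ ⨅ y, φ y := le_ciInf fun y => by linarith [hφ x y]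
  exact abs_le.2 ⟨by linarith, by linarith⟩

-- Since `∫ (f - g) = 0`, the test function `φ` may be replaced by `φ - c`, where `c` is the
-- midpoint of its range, so that `|φ - c|` is at most half the oscillation of `φ`.
theorem setIntegral_mul_sub_setIntegral_mul_le {α : Type*} [MeasurableSpace α] {μ : Measure α}
    {s : Set α} (hs : MeasurableSet s) {φ f g : α → ℝ} {D : ℝ} (hφ : Measurable φ)
    (hosc : ∀ x ∈ s, ∀ y ∈ s, φ x - φ y ≤ D) (hf : IntegrableOn f s μ) (hg : IntegrableOn g s μ)
    (hfg : ∫ x in s, f x ∂μ = ∫ x in s, g x ∂μ) :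
    ∫ x in s, φ x * f x ∂μ - ∫ x in s, φ x * g x ∂μ ≤ D / 2 * ∫ x in s, |f x - g x| ∂μ := by
  obtain ⟨c, hc⟩ := exists_forall_abs_sub_le_half (φ := fun x : s => φ x)
    fun x y => hosc x x.2 y y.2
  have hφc : ∀ᵐ x ∂μ.restrict s, ‖φ x - c‖ ≤ D / 2 :=
    ae_restrict_of_forall_mem hs fun x hx => hc ⟨x, hx⟩
  have hcenter {h : α → ℝ} (hh : IntegrableOn h s μ) :
      IntegrableOn (fun x => (φ x - c) * h x) s μ ∧
        ∫ x in s, φ x * h x ∂μ = ∫ x in s, (φ x - c) * h x ∂μ + c * ∫ x in s, h x ∂μ := by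
    have hint : IntegrableOn (fun x => (φ x - c) * h x) s μ :=
      Integrable.bdd_mul hh (hφ.sub_const c).aestronglyMeasurable hφc
    refine ⟨hint, ?_⟩
    rw [← integral_const_mul, ← integral_add hint (hh.const_mul c)]
    simp only [← add_mul, sub_add_cancel]
  have habs : IntegrableOn (fun x => |f x - g x|) s μ := (hf.sub hg).abs
  calc ∫ x in s, φ x * f x ∂μ - ∫ x in s, φ x * g x ∂μ
      = ∫ x in s, (φ x - c) * (f x - g x) ∂μ := by
        simp only [mul_sub]
        rw [integral_sub (hcenter hf).1 (hcenter hg).1, (hcenter hf).2, (hcenter hg).2, hfg]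
        ring
    _ ≤ ∫ x in s, D / 2 * |f x - g x| ∂μ := by
        refine (Real.le_norm_self _).trans (norm_integral_le_of_norm_le (habs.const_mul _) ?_)
        filter_upwards [hφc] with x hx
        rw [norm_mul]
        exact mul_le_mul_of_nonneg_right hx (norm_nonneg _)
    _ = D / 2 * ∫ x in s, |f x - g x| ∂μ := integral_const_mul _ _

end Dobrushin

section DirichletIntegral

open scoped ENNReal

/-- The kernel `t₊ ^ (a - 1) / Γ(a)` of the Riemann–Liouville fractional integral of order `a`,
with values in `ℝ≥0∞` so that convolutions need no integrability. -/
noncomputable def liouvilleKernel (a t : ℝ) : ℝ≥0∞ :=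
  ENNReal.ofReal (if 0 < t then t ^ (a - 1) / Real.Gamma a else 0)

variable {a b s : ℝ}

theorem liouvilleKernel_of_pos (hs : 0 < s) :
    liouvilleKernel a s = ENNReal.ofReal (s ^ (a - 1) / Real.Gamma a) := by
  rw [liouvilleKernel, if_pos hs]

theorem liouvilleKernel_of_nonpos (hs : s ≤ 0) : liouvilleKernel a s = 0 := by
  rw [liouvilleKernel, if_neg hs.not_gt, ENNReal.ofReal_zero]

@[fun_prop]
theorem measurable_liouvilleKernel (a : ℝ) : Measurable (liouvilleKernel a) :=
  (Measurable.ite measurableSet_Ioi (by fun_prop) measurable_const).ennreal_ofReal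

theorem liouvilleKernel_mul_liouvilleKernel (ha : 0 < a) (hb : 0 < b) (hs : 0 < s) (u : ℝ) :
    liouvilleKernel a (s * u) * liouvilleKernel b (s - s * u) =
      ENNReal.ofReal (s ^ (a + b - 2) / Real.Gamma (a + b)) * ProbabilityTheory.betaPDF a b u := by
  rcases le_or_gt u 0 with hu₀ | hu₀
  · rw [liouvilleKernel_of_nonpos (mul_nonpos_of_nonneg_of_nonpos hs.le hu₀),
      ProbabilityTheory.betaPDF_eq_zero_of_nonpos hu₀, zero_mul, mul_zero]
  rcases le_or_gt 1 u with hu₁ | hu₁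
  · rw [liouvilleKernel_of_nonpos (s := s - s * u) (by nlinarith),
      ProbabilityTheory.betaPDF_eq_zero_of_one_le hu₁, mul_zero, mul_zero]
  have hpow : s ^ (a - 1) * s ^ (b - 1) = s ^ (a + b - 2) := by
    rw [← Real.rpow_add hs]
    ring_nf
  rw [← mul_one_sub, liouvilleKernel_of_pos (mul_pos hs hu₀),
    liouvilleKernel_of_pos (mul_pos hs (sub_pos.2 hu₁)),
    ProbabilityTheory.betaPDF_of_pos_lt_one hu₀ hu₁, ← ENNReal.ofReal_mul (by positivity),
    ← ENNReal.ofReal_mul (by positivity), Real.mul_rpow hs.le hu₀.le,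
    Real.mul_rpow hs.le (sub_nonneg.2 hu₁.le), ProbabilityTheory.beta, ← hpow]
  congr 1
  field_simp

theorem lintegral_liouvilleKernel_mul (ha : 0 < a) (hb : 0 < b) (s : ℝ) :
    ∫⁻ t, liouvilleKernel a t * liouvilleKernel b (s - t) = liouvilleKernel (a + b) s := by
  rcases le_or_gt s 0 with hs | hs
  · have hzero (t : ℝ) : liouvilleKernel a t * liouvilleKernel b (s - t) = 0 := by
      rcases le_or_gt t 0 with ht | ht
      · rw [liouvilleKernel_of_nonpos ht, zero_mul]
      · rw [liouvilleKernel_of_nonpos (s := s - t) (by linarith), mul_zero]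
    simp only [hzero, lintegral_zero, liouvilleKernel_of_nonpos hs]
  · rw [← Real.smul_map_volume_mul_left hs.ne', lintegral_smul_measure,
      lintegral_map (by fun_prop) (by fun_prop)]
    simp only [liouvilleKernel_mul_liouvilleKernel ha hb hs]
    rw [lintegral_const_mul' _ _ ENNReal.ofReal_ne_top,
      ProbabilityTheory.lintegral_betaPDF_eq_one ha hb, mul_one, smul_eq_mul,
      ← ENNReal.ofReal_mul (abs_nonneg _), abs_of_pos hs, liouvilleKernel_of_pos hs,
      ← mul_div_assoc, mul_comm s, ← Real.rpow_add_one hs.ne']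
    ring_nf

theorem lintegral_fin_succ {n : ℕ} {f : (Fin (n + 1) → ℝ) → ℝ≥0∞} (hf : Measurable f) :
    ∫⁻ x, f x = ∫⁻ t, ∫⁻ y : Fin n → ℝ, f (Fin.cons t y) := by
  have hcons : ⇑(MeasurableEquiv.piFinSuccAbove (fun _ : Fin (n + 1) => ℝ) 0).symm =
      fun p : ℝ × (Fin n → ℝ) => Fin.cons p.1 p.2 := by
    ext1 p
    rw [MeasurableEquiv.piFinSuccAbove_symm_apply]
    simp [Fin.insertNthEquiv]
  have hmeas : Measurable fun p : ℝ × (Fin n → ℝ) => f (Fin.cons p.1 p.2) :=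
    hf.comp (hcons ▸ MeasurableEquiv.measurable _)
  rw [← (volume_preserving_piFinSuccAbove (fun _ : Fin (n + 1) => ℝ) 0).symm.lintegral_comp hf,
    hcons, Measure.volume_eq_prod, lintegral_prod _ hmeas.aemeasurable]

theorem lintegral_prod_liouvilleKernel {n : ℕ} {a : Fin n → ℝ} (ha : ∀ i, 0 < a i) (hb : 0 < b)
    (s : ℝ) :
    ∫⁻ x : Fin n → ℝ, (∏ i, liouvilleKernel (a i) (x i)) * liouvilleKernel b (s - ∑ i, x i) =
      liouvilleKernel (∑ i, a i + b) s := by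
  induction n generalizing s with
  | zero => simp [volume_pi]
  | succ n ih =>
    have hb' : 0 < ∑ i : Fin n, a i.succ + b :=
      add_pos_of_nonneg_of_pos (Finset.sum_nonneg fun i _ => (ha i.succ).le) hb
    rw [lintegral_fin_succ (by fun_prop)]
    simp only [Fin.prod_univ_succ, Fin.sum_univ_succ, Fin.cons_zero, Fin.cons_succ, mul_assoc,
      ← sub_sub]
    calc ∫⁻ t, ∫⁻ y : Fin n → ℝ, liouvilleKernel (a 0) t *
          ((∏ i, liouvilleKernel (a i.succ) (y i)) * liouvilleKernel b (s - t - ∑ i, y i))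
        = ∫⁻ t, liouvilleKernel (a 0) t *
            liouvilleKernel (∑ i : Fin n, a i.succ + b) (s - t) := by
          refine lintegral_congr fun t => ?_
          rw [lintegral_const_mul _ (by fun_prop), ih (fun i => ha i.succ)]
      _ = liouvilleKernel (a 0 + ∑ i : Fin n, a i.succ + b) s := by
          rw [lintegral_liouvilleKernel_mul (ha 0) hb', add_assoc]

end DirichletIntegral

section Dirichlet

theorem measurableSet_simplexCoords (K : ℕ) : MeasurableSet (simplexCoords K) := by
  have hinter : simplexCoords K = (⋂ i, {x | 0 < x i}) ∩ {x | ∑ i, x i < 1} := by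
    ext
    simp [simplexCoords]
  rw [hinter]
  exact (MeasurableSet.iInter fun i => measurableSet_lt (by fun_prop) (by fun_prop)).inter
    (measurableSet_lt (by fun_prop) (by fun_prop))

theorem fullProb_castSucc {n : ℕ} (x : Fin n → ℝ) (i : Fin n) :
    fullProb (n + 1) x i.castSucc = x i := by
  simp [fullProb]

theorem fullProb_last {n : ℕ} (x : Fin n → ℝ) :
    fullProb (n + 1) x (Fin.last n) = 1 - ∑ i, x i := by
  simp [fullProb]

@[fun_prop]
theorem measurable_fullProb (K : ℕ) : Measurable (fullProb K) := by
  refine measurable_pi_iff.2 fun k => ?_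
  unfold fullProb
  split_ifs
  · exact measurable_pi_apply _
  · fun_prop

@[fun_prop]
theorem measurable_dirichletPdf {K : ℕ} (γ : Fin K → ℝ) : Measurable (dirichletPdf γ) := by
  unfold dirichletPdf
  fun_prop

/-- The Dirichlet distribution with parameter `γ`, in simplex coordinates. -/
noncomputable def dirichletMeasure {K : ℕ} (γ : Fin K → ℝ) : Measure (Fin (K - 1) → ℝ) :=
  (volume.restrict (simplexCoords K)).withDensity fun x => ENNReal.ofReal (dirichletPdf γ x)

variable {K : ℕ} [NeZero K] {γ : Fin K → ℝ} {x : Fin (K - 1) → ℝ}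

theorem fullProb_mem_probSimplex (hx : x ∈ simplexCoords K) : fullProb K x ∈ probSimplex K := by
  obtain ⟨n, rfl⟩ := Nat.exists_eq_succ_of_ne_zero (NeZero.ne K)
  refine ⟨fun k => ?_, ?_⟩
  · cases k using Fin.lastCases with
    | last => exact (fullProb_last x).symm ▸ sub_pos.2 hx.2
    | cast i => exact (fullProb_castSucc x i).symm ▸ hx.1 i
  · rw [Fin.sum_univ_castSucc, fullProb_last]
    simp only [fullProb_castSucc, add_sub_cancel]

theorem multiBeta_pos (hγ : ∀ k, 0 < γ k) : 0 < multiBeta γ :=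
  div_pos (Finset.prod_pos fun k _ => Real.Gamma_pos_of_pos (hγ k))
    (Real.Gamma_pos_of_pos (Finset.sum_pos (fun k _ => hγ k) Finset.univ_nonempty))

theorem dirichletPdf_pos (hγ : ∀ k, 0 < γ k) (hx : x ∈ simplexCoords K) : 0 < dirichletPdf γ x :=
  mul_pos (one_div_pos.2 (multiBeta_pos hγ)) (Finset.prod_pos fun k _ =>
    Real.rpow_pos_of_pos ((fullProb_mem_probSimplex hx).1 k) _)

theorem ae_dirichletPdf_pos (hγ : ∀ k, 0 < γ k) :
    ∀ᵐ x ∂volume.restrict (simplexCoords K), 0 < dirichletPdf γ x :=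
  ae_restrict_of_forall_mem (measurableSet_simplexCoords K) fun _ => dirichletPdf_pos hγ

theorem ofReal_dirichletPdf {n : ℕ} {γ : Fin (n + 1) → ℝ} (hγ : ∀ k, 0 < γ k) {x : Fin n → ℝ}
    (hx : x ∈ simplexCoords (n + 1)) :
    ENNReal.ofReal (dirichletPdf γ x) = ENNReal.ofReal (Real.Gamma (∑ k, γ k)) *
      ((∏ i : Fin n, liouvilleKernel (γ i.castSucc) (x i)) *
        liouvilleKernel (γ (Fin.last n)) (1 - ∑ i, x i)) := by
  have hlast : 0 < 1 - ∑ i, x i := sub_pos.2 hx.2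
  have hpos (i : Fin n) : 0 ≤ x i ^ (γ i.castSucc - 1) / Real.Gamma (γ i.castSucc) :=
    div_nonneg (Real.rpow_nonneg (hx.1 i).le _) (Real.Gamma_pos_of_pos (hγ _)).le
  have hsum : 0 < ∑ k, γ k := Finset.sum_pos (fun k _ => hγ k) Finset.univ_nonempty
  simp only [liouvilleKernel_of_pos hlast,
    fun i => liouvilleKernel_of_pos (a := γ (Fin.castSucc i)) (hx.1 i)]
  rw [← ENNReal.ofReal_prod_of_nonneg fun i _ => hpos i,
    ← ENNReal.ofReal_mul (Finset.prod_nonneg fun i _ => hpos i),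
    ← ENNReal.ofReal_mul (Real.Gamma_pos_of_pos hsum).le, dirichletPdf, multiBeta, one_div_div,
    Fin.prod_univ_castSucc, Fin.prod_univ_castSucc, fullProb_last, Finset.prod_div_distrib]
  simp only [fullProb_castSucc]
  congr 1
  ring

theorem prod_liouvilleKernel_eq_zero {n : ℕ} (γ : Fin (n + 1) → ℝ) {x : Fin n → ℝ}
    (hx : x ∉ simplexCoords (n + 1)) :
    (∏ i : Fin n, liouvilleKernel (γ i.castSucc) (x i)) *
      liouvilleKernel (γ (Fin.last n)) (1 - ∑ i, x i) = 0 := by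
  rcases not_and_or.1 hx with hneg | hsum
  · obtain ⟨i, hi⟩ := not_forall.1 hneg
    have hprod : ∏ i : Fin n, liouvilleKernel (γ i.castSucc) (x i) = 0 :=
      Finset.prod_eq_zero (Finset.mem_univ i) (liouvilleKernel_of_nonpos (not_lt.1 hi))
    rw [hprod, zero_mul]
  · rw [liouvilleKernel_of_nonpos (s := 1 - ∑ i, x i) (sub_nonpos.2 (not_lt.1 hsum)), mul_zero]

theorem indicator_ofReal_dirichletPdf {n : ℕ} {γ : Fin (n + 1) → ℝ} (hγ : ∀ k, 0 < γ k)
    (x : Fin n → ℝ) :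
    (simplexCoords (n + 1)).indicator (fun x => ENNReal.ofReal (dirichletPdf γ x)) x =
      ENNReal.ofReal (Real.Gamma (∑ k, γ k)) *
        ((∏ i : Fin n, liouvilleKernel (γ i.castSucc) (x i)) *
          liouvilleKernel (γ (Fin.last n)) (1 - ∑ i, x i)) := by
  by_cases hx : x ∈ simplexCoords (n + 1)
  · rw [Set.indicator_of_mem hx, ofReal_dirichletPdf hγ hx]
  · rw [Set.indicator_of_notMem hx, prod_liouvilleKernel_eq_zero γ hx, mul_zero]

theorem isProbabilityMeasure_dirichletMeasure (hγ : ∀ k, 0 < γ k) :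
    IsProbabilityMeasure (dirichletMeasure γ) := by
  obtain ⟨n, rfl⟩ := Nat.exists_eq_succ_of_ne_zero (NeZero.ne K)
  have hsum : 0 < ∑ k, γ k := Finset.sum_pos (fun k _ => hγ k) Finset.univ_nonempty
  have hΓ := Real.Gamma_pos_of_pos hsum
  constructor
  rw [dirichletMeasure, withDensity_apply _ .univ, Measure.restrict_univ,
    ← lintegral_indicator (measurableSet_simplexCoords _)]
  calc ∫⁻ x : Fin n → ℝ, (simplexCoords (n + 1)).indicator
        (fun x => ENNReal.ofReal (dirichletPdf γ x)) x
      = ENNReal.ofReal (Real.Gamma (∑ k, γ k)) * liouvilleKernel (∑ k, γ k) 1 := by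
        simp only [indicator_ofReal_dirichletPdf hγ]
        rw [lintegral_const_mul' _ _ ENNReal.ofReal_ne_top,
          lintegral_prod_liouvilleKernel (fun i => hγ i.castSucc) (hγ (Fin.last n)),
          ← Fin.sum_univ_castSucc]
    _ = 1 := by
        rw [liouvilleKernel_of_pos one_pos, ← ENNReal.ofReal_mul hΓ.le, Real.one_rpow,
          mul_one_div_cancel hΓ.ne', ENNReal.ofReal_one]

theorem integral_dirichletMeasure (hγ : ∀ k, 0 < γ k) (φ : (Fin (K - 1) → ℝ) → ℝ) :
    ∫ x, φ x ∂dirichletMeasure γ = ∫ x in simplexCoords K, φ x * dirichletPdf γ x := by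
  rw [dirichletMeasure, integral_withDensity_eq_integral_toReal_smul (by fun_prop)
    (.of_forall fun _ => ENNReal.ofReal_lt_top)]
  refine setIntegral_congr_fun (measurableSet_simplexCoords K) fun x hx => ?_
  simp only [ENNReal.toReal_ofReal (dirichletPdf_pos hγ hx).le, smul_eq_mul, mul_comm]

theorem integrable_dirichletMeasure_iff (hγ : ∀ k, 0 < γ k) {φ : (Fin (K - 1) → ℝ) → ℝ} :
    Integrable φ (dirichletMeasure γ) ↔
      IntegrableOn (fun x => φ x * dirichletPdf γ x) (simplexCoords K) := by
  rw [dirichletMeasure, integrable_withDensity_iff_integrable_smul' (by fun_prop)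
    (.of_forall fun _ => ENNReal.ofReal_lt_top)]
  refine integrableOn_congr_fun (fun x hx => ?_) (measurableSet_simplexCoords K)
  simp only [ENNReal.toReal_ofReal (dirichletPdf_pos hγ hx).le, smul_eq_mul, mul_comm]

theorem setIntegral_dirichletPdf (hγ : ∀ k, 0 < γ k) :
    ∫ x in simplexCoords K, dirichletPdf γ x = 1 := by
  have := isProbabilityMeasure_dirichletMeasure hγ
  simpa using (integral_dirichletMeasure hγ fun _ => 1).symm

theorem integrableOn_dirichletPdf (hγ : ∀ k, 0 < γ k) :
    IntegrableOn (dirichletPdf γ) (simplexCoords K) :=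
  integrable_of_integral_eq_one (setIntegral_dirichletPdf hγ)

end Dirichlet

section LogContrast

open ProbabilityTheory Filter Topology

theorem hasDerivAt_Gamma_add_mul {a : ℝ} (ha : 0 < a) (e : ℝ) :
    HasDerivAt (fun t => Real.Gamma (a + t * e)) (Real.Gamma a * (e * digamma a)) 0 := by
  have hΓ : HasDerivAt Real.Gamma (Real.Gamma a * digamma a) (a + 0 * e) := by
    rw [zero_mul, add_zero, digamma, mul_div_cancel₀ _ (Real.Gamma_pos_of_pos ha).ne']
    exact (Real.differentiableAt_Gamma fun m => by linarith [m.cast_nonneg (α := ℝ)]).hasDerivAt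
  have hline : HasDerivAt (fun t => a + t * e) e 0 := (hasDerivAt_mul_const e).const_add a
  rw [mul_comm e, ← mul_assoc]
  exact HasDerivAt.comp (0 : ℝ) hΓ hline

/-- The logarithm `∑ₖ ηₖ log pₖ` of the monomial with exponents `η`, in simplex coordinates. -/
noncomputable def logContrast {K : ℕ} (η : Fin K → ℝ) (x : Fin (K - 1) → ℝ) : ℝ :=
  ∑ k, η k * Real.log (fullProb K x k)

variable {K : ℕ} [NeZero K] {γ : Fin K → ℝ}

theorem hasDerivAt_multiBeta_add_smul (hγ : ∀ k, 0 < γ k) (η : Fin K → ℝ) :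
    HasDerivAt (fun t : ℝ => multiBeta (γ + t • η))
      (multiBeta γ * (∑ k, η k * digamma (γ k) - (∑ k, η k) * digamma (∑ k, γ k))) 0 := by
  have hsum : 0 < ∑ k, γ k := Finset.sum_pos (fun k _ => hγ k) Finset.univ_nonempty
  have hΓ : Real.Gamma (∑ k, γ k + 0 * ∑ k, η k) ≠ 0 := by
    rw [zero_mul, add_zero]
    exact (Real.Gamma_pos_of_pos hsum).ne'
  have hnum : HasDerivAt (fun t => ∏ k, Real.Gamma (γ k + t * η k))
      ((∏ k, Real.Gamma (γ k)) * ∑ k, η k * digamma (γ k)) 0 := by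
    refine (HasDerivAt.fun_finsetProd (u := Finset.univ) fun k _ =>
      hasDerivAt_Gamma_add_mul (hγ k) (η k)).congr_deriv ?_
    simp only [zero_mul, add_zero, smul_eq_mul, ← mul_assoc, Finset.mul_sum,
      Finset.prod_erase_mul _ _ (Finset.mem_univ _)]
  have hdiv := hnum.fun_div (hasDerivAt_Gamma_add_mul hsum (∑ k, η k)) hΓ
  simp only [multiBeta, Pi.add_apply, Pi.smul_apply, smul_eq_mul, Finset.sum_add_distrib,
    ← Finset.mul_sum]
  refine hdiv.congr_deriv ?_
  simp only [zero_mul, add_zero] at hΓ ⊢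
  field_simp

theorem exp_mul_logContrast_mul_dirichletPdf {η : Fin K → ℝ} {t : ℝ}
    (hη : ∀ k, 0 < (γ + t • η) k) {x : Fin (K - 1) → ℝ} (hx : x ∈ simplexCoords K) :
    Real.exp (t * logContrast η x) * dirichletPdf γ x =
      multiBeta (γ + t • η) / multiBeta γ * dirichletPdf (γ + t • η) x := by
  have hB := (multiBeta_pos hη).ne'
  have hexp : Real.exp (t * logContrast η x) = ∏ k, fullProb K x k ^ (t * η k) := by
    rw [logContrast, Finset.mul_sum, Real.exp_sum]
    refine Finset.prod_congr rfl fun k _ => ?_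
    rw [Real.rpow_def_of_pos ((fullProb_mem_probSimplex hx).1 k)]
    ring_nf
  have hprod : ∏ k, fullProb K x k ^ ((γ + t • η) k - 1) =
      (∏ k, fullProb K x k ^ (t * η k)) * ∏ k, fullProb K x k ^ (γ k - 1) := by
    rw [← Finset.prod_mul_distrib]
    refine Finset.prod_congr rfl fun k _ => ?_
    rw [← Real.rpow_add ((fullProb_mem_probSimplex hx).1 k), Pi.add_apply, Pi.smul_apply,
      smul_eq_mul]
    ring_nf
  rw [hexp, dirichletPdf, dirichletPdf, hprod]
  field_simp

theorem mem_integrableExpSet_logContrast (hγ : ∀ k, 0 < γ k) {η : Fin K → ℝ} {t : ℝ}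
    (hη : ∀ k, 0 < (γ + t • η) k) :
    t ∈ integrableExpSet (logContrast η) (dirichletMeasure γ) := by
  refine (integrable_dirichletMeasure_iff hγ).2 ?_
  refine ((integrableOn_dirichletPdf hη).const_mul (multiBeta (γ + t • η) / multiBeta γ)).congr ?_
  exact ae_restrict_of_forall_mem (measurableSet_simplexCoords K) fun x hx =>
    (exp_mul_logContrast_mul_dirichletPdf hη hx).symm

theorem mgf_logContrast (hγ : ∀ k, 0 < γ k) {η : Fin K → ℝ} {t : ℝ}
    (hη : ∀ k, 0 < (γ + t • η) k) :
    mgf (logContrast η) (dirichletMeasure γ) t = multiBeta (γ + t • η) / multiBeta γ := by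
  rw [mgf, integral_dirichletMeasure hγ, setIntegral_congr_fun (measurableSet_simplexCoords K)
    fun x hx => exp_mul_logContrast_mul_dirichletPdf hη hx, integral_const_mul,
    setIntegral_dirichletPdf hη, mul_one]

theorem eventually_forall_pos_add_smul {ι : Type*} [Finite ι] {γ : ι → ℝ} (hγ : ∀ k, 0 < γ k)
    (η : ι → ℝ) : ∀ᶠ t : ℝ in 𝓝 0, ∀ k, 0 < (γ + t • η) k := by
  refine eventually_all.2 fun k => ?_
  have hcont : Continuous fun t : ℝ => (γ + t • η) k := by fun_prop
  exact hcont.continuousAt.eventually_const_lt (by simpa using hγ k)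

theorem zero_mem_interior_integrableExpSet_logContrast (hγ : ∀ k, 0 < γ k) (η : Fin K → ℝ) :
    (0 : ℝ) ∈ interior (integrableExpSet (logContrast η) (dirichletMeasure γ)) :=
  mem_interior_iff_mem_nhds.2 <| (eventually_forall_pos_add_smul hγ η).mono fun _ =>
    mem_integrableExpSet_logContrast hγ

theorem integrable_logContrast (hγ : ∀ k, 0 < γ k) (η : Fin K → ℝ) :
    Integrable (logContrast η) (dirichletMeasure γ) :=
  integrable_of_mem_interior_integrableExpSet (zero_mem_interior_integrableExpSet_logContrast hγ η)

theorem integral_logContrast (hγ : ∀ k, 0 < γ k) (η : Fin K → ℝ) :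
    ∫ x, logContrast η x ∂dirichletMeasure γ =
      ∑ k, η k * digamma (γ k) - (∑ k, η k) * digamma (∑ k, γ k) := by
  have hmgf : mgf (logContrast η) (dirichletMeasure γ) =ᶠ[𝓝 0]
      fun t => multiBeta (γ + t • η) / multiBeta γ :=
    (eventually_forall_pos_add_smul hγ η).mono fun _ => mgf_logContrast hγ
  rw [← deriv_mgf_zero (zero_mem_interior_integrableExpSet_logContrast hγ η), hmgf.deriv_eq,
    ((hasDerivAt_multiBeta_add_smul hγ η).div_const _).deriv,
    mul_div_cancel_left₀ _ (multiBeta_pos hγ).ne']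

end LogContrast

section JeffreysDirichlet

variable {K : ℕ} [NeZero K] {γ γ' : Fin K → ℝ}

/-- The closed form of the Jeffreys divergence between the Dirichlet distributions with parameters
`γ` and `γ'`. -/
noncomputable def dirichletJeffreys {K : ℕ} (γ γ' : Fin K → ℝ) : ℝ :=
  ∑ k, (γ k - γ' k) * (digamma (γ k) - digamma (γ' k)) -
    (∑ k, γ k - ∑ k, γ' k) * (digamma (∑ k, γ k) - digamma (∑ k, γ' k))

theorem log_dirichletPdf {x : Fin (K - 1) → ℝ} (hγ : ∀ k, 0 < γ k) (hx : x ∈ simplexCoords K) :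
    Real.log (dirichletPdf γ x) = logContrast (γ - 1) x - Real.log (multiBeta γ) := by
  have hpow (k : Fin K) := Real.rpow_pos_of_pos ((fullProb_mem_probSimplex hx).1 k) (γ k - 1)
  rw [dirichletPdf, Real.log_mul (one_div_pos.2 (multiBeta_pos hγ)).ne'
    (Finset.prod_pos fun k _ => hpow k).ne', one_div, Real.log_inv,
    Real.log_prod fun k _ => (hpow k).ne', logContrast, neg_add_eq_sub]
  congr 1
  exact Finset.sum_congr rfl fun k _ => Real.log_rpow ((fullProb_mem_probSimplex hx).1 k) _

theorem log_dirichletPdf_div_dirichletPdf {x : Fin (K - 1) → ℝ} (hγ : ∀ k, 0 < γ k)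
    (hγ' : ∀ k, 0 < γ' k) (hx : x ∈ simplexCoords K) :
    Real.log (dirichletPdf γ x / dirichletPdf γ' x) =
      logContrast (γ - γ') x - Real.log (multiBeta γ / multiBeta γ') := by
  rw [Real.log_div (dirichletPdf_pos hγ hx).ne' (dirichletPdf_pos hγ' hx).ne',
    Real.log_div (multiBeta_pos hγ).ne' (multiBeta_pos hγ').ne', log_dirichletPdf hγ hx,
    log_dirichletPdf hγ' hx]
  simp only [logContrast, Pi.sub_apply, Pi.one_apply, sub_mul, Finset.sum_sub_distrib]
  ring

theorem sub_mul_log_dirichletPdf_div {x : Fin (K - 1) → ℝ} (hγ : ∀ k, 0 < γ k)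
    (hγ' : ∀ k, 0 < γ' k) (hx : x ∈ simplexCoords K) :
    (dirichletPdf γ x - dirichletPdf γ' x) * Real.log (dirichletPdf γ x / dirichletPdf γ' x) =
      (logContrast (γ - γ') x - Real.log (multiBeta γ / multiBeta γ')) * dirichletPdf γ x -
        (logContrast (γ - γ') x - Real.log (multiBeta γ / multiBeta γ')) * dirichletPdf γ' x := by
  rw [log_dirichletPdf_div_dirichletPdf hγ hγ' hx]
  ring

theorem integrable_logContrast_sub_const (hγ : ∀ k, 0 < γ k) (η : Fin K → ℝ) (c : ℝ) :
    Integrable (fun x => logContrast η x - c) (dirichletMeasure γ) :=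
  have := isProbabilityMeasure_dirichletMeasure hγ
  (integrable_logContrast hγ η).sub (integrable_const c)

theorem integral_logContrast_sub_const (hγ : ∀ k, 0 < γ k) (η : Fin K → ℝ) (c : ℝ) :
    ∫ x, (logContrast η x - c) ∂dirichletMeasure γ =
      ∑ k, η k * digamma (γ k) - (∑ k, η k) * digamma (∑ k, γ k) - c := by
  have := isProbabilityMeasure_dirichletMeasure hγ
  rw [integral_sub (integrable_logContrast hγ η) (integrable_const c), integral_logContrast hγ,
    integral_const, probReal_univ, one_smul]

theorem integrableOn_sub_mul_log_dirichletPdf_div (hγ : ∀ k, 0 < γ k) (hγ' : ∀ k, 0 < γ' k) :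
    IntegrableOn (fun x => (dirichletPdf γ x - dirichletPdf γ' x) *
      Real.log (dirichletPdf γ x / dirichletPdf γ' x)) (simplexCoords K) := by
  rw [integrableOn_congr_fun (fun x hx => sub_mul_log_dirichletPdf_div hγ hγ' hx)
    (measurableSet_simplexCoords K)]
  exact ((integrable_dirichletMeasure_iff hγ).1 (integrable_logContrast_sub_const hγ _ _)).sub
    ((integrable_dirichletMeasure_iff hγ').1 (integrable_logContrast_sub_const hγ' _ _))

theorem jeffreysDiv_dirichletPdf (hγ : ∀ k, 0 < γ k) (hγ' : ∀ k, 0 < γ' k) :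
    jeffreysDiv (volume.restrict (simplexCoords K)) (dirichletPdf γ) (dirichletPdf γ') =
      dirichletJeffreys γ γ' := by
  rw [jeffreysDiv, setIntegral_congr_fun (measurableSet_simplexCoords K)
    fun x hx => sub_mul_log_dirichletPdf_div hγ hγ' hx,
    integral_sub
      ((integrable_dirichletMeasure_iff hγ).1 (integrable_logContrast_sub_const hγ _ _))
      ((integrable_dirichletMeasure_iff hγ').1 (integrable_logContrast_sub_const hγ' _ _)),
    ← integral_dirichletMeasure hγ, ← integral_dirichletMeasure hγ',
    integral_logContrast_sub_const hγ, integral_logContrast_sub_const hγ', dirichletJeffreys]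
  simp only [Pi.sub_apply, mul_sub, Finset.sum_sub_distrib]
  ring

end JeffreysDirichlet

section Channel

theorem sigmaT_eq_sigmoid (T x : ℝ) : sigmaT T x = Real.sigmoid (x / T) := by
  rw [sigmaT, Real.sigmoid_def, one_div, neg_div]

theorem sigmaT_nonneg (T x : ℝ) : 0 ≤ sigmaT T x :=
  sigmaT_eq_sigmoid T x ▸ Real.sigmoid_nonneg _

theorem sigmaT_add_sigmaT_neg (T x : ℝ) : sigmaT T x + sigmaT T (-x) = 1 := by
  rw [sigmaT_eq_sigmoid, sigmaT_eq_sigmoid, neg_div, Real.sigmoid_neg, add_sub_cancel]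

theorem dsKernel_mem_stdSimplex (K : ℕ) (T q : ℝ) (p : Fin K → ℝ) :
    dsKernel K T q p ∈ stdSimplex ℝ (Fin K → Bool) := by
  refine ⟨fun b => Finset.prod_nonneg fun k _ => sigmaT_nonneg _ _, ?_⟩
  simp only [dsKernel]
  rw [← Fintype.prod_sum fun k (c : Bool) =>
    sigmaT T ((2 * (if c then (1 : ℝ) else 0) - 1) * (p k - q))]
  refine Finset.prod_eq_one fun k _ => ?_
  simpa [show (2 : ℝ) - 1 = 1 by norm_num] using sigmaT_add_sigmaT_neg T (p k - q)

theorem measurable_dsKernel (K : ℕ) (T q : ℝ) (b : Fin K → Bool) :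
    Measurable fun p => dsKernel K T q p b := by
  simp only [dsKernel, sigmaT]
  fun_prop

end Channel

section Disclosure

variable {K : ℕ} [NeZero K] {γ γ' : Fin K → ℝ} {β : Type*} [Fintype β]
  {κ : (Fin K → ℝ) → β → ℝ}

theorem integrableOn_channel_mul_dirichletPdf (hγ : ∀ k, 0 < γ k)
    (hκ : ∀ b, Measurable fun p => κ p b) (hκ₁ : ∀ p ∈ probSimplex K, κ p ∈ stdSimplex ℝ β)
    (b : β) :
    IntegrableOn (fun x => κ (fullProb K x) b * dirichletPdf γ x) (simplexCoords K) := by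
  refine Integrable.bdd_mul (c := 1) (integrableOn_dirichletPdf hγ)
    ((hκ b).comp (measurable_fullProb K)).aestronglyMeasurable ?_
  refine ae_restrict_of_forall_mem (measurableSet_simplexCoords K) fun x hx => ?_
  obtain ⟨h₀, h₁⟩ := mem_Icc_of_mem_stdSimplex (hκ₁ _ (fullProb_mem_probSimplex hx)) b
  rwa [Real.norm_of_nonneg h₀]

theorem sum_setIntegral_channel (hγ : ∀ k, 0 < γ k)
    (hκ : ∀ b, Measurable fun p => κ p b) (hκ₁ : ∀ p ∈ probSimplex K, κ p ∈ stdSimplex ℝ β)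
    (B : Finset β) :
    ∑ b ∈ B, ∫ x in simplexCoords K, κ (fullProb K x) b * dirichletPdf γ x =
      ∫ x in simplexCoords K, (∑ b ∈ B, κ (fullProb K x) b) * dirichletPdf γ x := by
  rw [← integral_finsetSum _ fun b _ => integrableOn_channel_mul_dirichletPdf hγ hκ hκ₁ b]
  simp only [Finset.sum_mul]

theorem sum_channel_dirichletPdf_sub_le (hγ : ∀ k, 0 < γ k) (hγ' : ∀ k, 0 < γ' k)
    (hκ : ∀ b, Measurable fun p => κ p b) (hκ₁ : ∀ p ∈ probSimplex K, κ p ∈ stdSimplex ℝ β)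
    (B : Finset β) :
    (∑ b ∈ B, ∫ x in simplexCoords K, κ (fullProb K x) b * dirichletPdf γ x) -
        ∑ b ∈ B, ∫ x in simplexCoords K, κ (fullProb K x) b * dirichletPdf γ' x ≤
      dobrushinCoeff (fun p : probSimplex K => κ p) / 2 * √(dirichletJeffreys γ γ') := by
  have hone := setIntegral_dirichletPdf hγ
  have hone' := setIntegral_dirichletPdf hγ'
  rw [sum_setIntegral_channel hγ hκ hκ₁, sum_setIntegral_channel hγ' hκ hκ₁]
  calc _ ≤ dobrushinCoeff (fun p : probSimplex K => κ p) / 2 *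
        ∫ x in simplexCoords K, |dirichletPdf γ x - dirichletPdf γ' x| := by
        refine setIntegral_mul_sub_setIntegral_mul_le (measurableSet_simplexCoords K)
          (Finset.measurable_fun_sum _ fun b _ => (hκ b).comp (measurable_fullProb K))
          (fun x hx y hy => ?_) (integrableOn_dirichletPdf hγ) (integrableOn_dirichletPdf hγ')
          (hone.trans hone'.symm)
        exact sum_sub_sum_le_dobrushinCoeff (fun p : probSimplex K => hκ₁ p p.2)
          ⟨_, fullProb_mem_probSimplex hx⟩ ⟨_, fullProb_mem_probSimplex hy⟩ B
    _ ≤ _ := by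
        rw [← jeffreysDiv_dirichletPdf hγ hγ']
        exact mul_le_mul_of_nonneg_left (integral_abs_sub_le_sqrt_jeffreysDiv hone hone'
          (ae_dirichletPdf_pos hγ) (ae_dirichletPdf_pos hγ')
          (integrableOn_sub_mul_log_dirichletPdf_div hγ hγ'))
          (div_nonneg dobrushinCoeff_nonneg zero_le_two)

end Disclosure

section Parameters

variable {K : ℕ}

theorem sum_ite_val_eq_zero (hK : K ≠ 0) (a b : ℝ) :
    ∑ k : Fin K, (if (k : ℕ) = 0 then a else b) = a + (K - 1) * b := by
  obtain ⟨n, rfl⟩ := Nat.exists_eq_succ_of_ne_zero hK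
  simp [Fin.sum_univ_succ]

theorem gammaOut_pos (hK : 2 ≤ K) {epsE epsA : ℝ} (hE : 0 < epsE) (hA₀ : 0 < epsA)
    (hA₁ : epsA < 1) (k : Fin K) : 0 < gammaOut K epsE epsA k := by
  have hK' : (0 : ℝ) < K - 1 := sub_pos.2 (by exact_mod_cast hK)
  unfold gammaOut
  split_ifs
  · exact div_pos (sub_pos.2 hA₁) hE
  · positivity

theorem gammaIn_pos (hK : 2 ≤ K) {epsE Δ epsA : ℝ} (hE : 0 < epsE) (hΔ : -1 < Δ)
    (hA₀ : Δ / (1 + Δ) < epsA) (hA₁ : epsA < 1) (k : Fin K) : 0 < gammaIn K epsE Δ epsA k := by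
  have hK' : (0 : ℝ) < K - 1 := sub_pos.2 (by exact_mod_cast hK)
  have hΔ' : 0 < 1 + Δ := by linarith
  rw [div_lt_iff₀ hΔ'] at hA₀
  unfold gammaIn
  split_ifs
  · exact div_pos (mul_pos hΔ' (sub_pos.2 hA₁)) hE
  · exact div_pos (sub_pos.2 hA₀) (mul_pos hK' hE)

theorem sum_gammaOut (hK : 2 ≤ K) (epsE epsA : ℝ) :
    ∑ k, gammaOut K epsE epsA k = 1 / epsE := by
  have hK' : (K : ℝ) - 1 ≠ 0 := (sub_pos.2 (by exact_mod_cast hK)).ne'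
  simp only [gammaOut]
  rw [sum_ite_val_eq_zero (by lia), mul_div_assoc', mul_div_mul_left _ _ hK', ← add_div,
    sub_add_cancel]

theorem sum_gammaIn (hK : 2 ≤ K) (epsE Δ epsA : ℝ) :
    ∑ k, gammaIn K epsE Δ epsA k = 1 / epsE := by
  have hK' : (K : ℝ) - 1 ≠ 0 := (sub_pos.2 (by exact_mod_cast hK)).ne'
  simp only [gammaIn]
  rw [sum_ite_val_eq_zero (by lia), mul_div_assoc', mul_div_mul_left _ _ hK', ← add_div]
  ring

theorem dirichletJeffreys_gammaOut_gammaIn (hK : 2 ≤ K) (epsE Δ epsA : ℝ) :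
    dirichletJeffreys (gammaOut K epsE epsA) (gammaIn K epsE Δ epsA) =
      Δ * (1 - epsA) / epsE * (digamma ((1 + Δ) * (1 - epsA) / epsE) - digamma ((1 - epsA) / epsE)
        + digamma (epsA / ((K - 1) * epsE))
        - digamma ((epsA * (1 + Δ) - Δ) / ((K - 1) * epsE))) := by
  have hK' : (K : ℝ) - 1 ≠ 0 := (sub_pos.2 (by exact_mod_cast hK)).ne'
  have hterm (k : Fin K) :
      (gammaOut K epsE epsA k - gammaIn K epsE Δ epsA k) *
          (digamma (gammaOut K epsE epsA k) - digamma (gammaIn K epsE Δ epsA k)) =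
        if (k : ℕ) = 0 then
          ((1 - epsA) / epsE - (1 + Δ) * (1 - epsA) / epsE) *
            (digamma ((1 - epsA) / epsE) - digamma ((1 + Δ) * (1 - epsA) / epsE))
        else
          (epsA / ((K - 1) * epsE) - (epsA * (1 + Δ) - Δ) / ((K - 1) * epsE)) *
            (digamma (epsA / ((K - 1) * epsE)) -
              digamma ((epsA * (1 + Δ) - Δ) / ((K - 1) * epsE))) := by
    unfold gammaOut gammaIn
    split_ifs <;> rfl
  rw [dirichletJeffreys, sum_gammaOut hK, sum_gammaIn hK, sub_self, zero_mul, sub_zero]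
  simp only [hterm]
  rw [sum_ite_val_eq_zero (by lia), ← sub_div _ _ (((K : ℝ) - 1) * epsE), ← mul_assoc,
    mul_div_assoc', mul_div_mul_left _ _ hK']
  ring

end Parameters

theorem stmt13_general {K : ℕ} (hK : 2 ≤ K) {epsE Δ epsA : ℝ} (hεe : 0 < epsE) (hΔ : -1 < Δ)
    (hεa₀ : 0 < epsA) (hεa₁ : Δ / (1 + Δ) < epsA) (hεa₂ : epsA < 1)
    {β : Type*} [Fintype β] {κ : (Fin K → ℝ) → β → ℝ} (hκ : ∀ b, Measurable fun p => κ p b)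
    (hκ₁ : ∀ p ∈ probSimplex K, κ p ∈ stdSimplex ℝ β) {νout νin : β → ℝ}
    (hνout : ∀ b, νout b = ∫ x in simplexCoords K,
        κ (fullProb K x) b * dirichletPdf (gammaOut K epsE epsA) x)
    (hνin : ∀ b, νin b = ∫ x in simplexCoords K,
        κ (fullProb K x) b * dirichletPdf (gammaIn K epsE Δ epsA) x)
    (B : Finset β) :
    ∑ b ∈ B, νout b - ∑ b ∈ B, νin b ≤
      dobrushinCoeff (fun p : probSimplex K => κ p) / 2 * AdvCVub Δ epsA epsE K := by
  have : NeZero K := ⟨by lia⟩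
  simp only [hνout, hνin]
  rw [AdvCVub, ← dirichletJeffreys_gammaOut_gammaIn hK]
  exact sum_channel_dirichletPdf_sub_le (gammaOut_pos hK hεe hεa₀ hεa₂)
    (gammaIn_pos hK hεe hΔ hεa₁ hεa₂) hκ hκ₁ B

/-- Proposition 3 (decision-set disclosure): the advantage of the attacker observing
the randomized decision set is bounded by `δ_{T,q} · Adv^CV-ub`. -/
theorem stmt13 (K : ℕ) (hK : 2 ≤ K) (epsE Δ epsA : ℝ)
    (hεe : 0 < epsE) (hΔ : 0 ≤ Δ) (hεa₁ : Δ / (1 + Δ) < epsA) (hεa₂ : epsA < 1)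
    (q T : ℝ) (hq : q ∈ Set.Ioo (0 : ℝ) 1) (hT : 0 < T)
    (νout νin : (Fin K → Bool) → ℝ)
    (hνout : ∀ b, νout b = ∫ x in simplexCoords K,
        dsKernel K T q (fullProb K x) b * dirichletPdf (gammaOut K epsE epsA) x)
    (hνin : ∀ b, νin b = ∫ x in simplexCoords K,
        dsKernel K T q (fullProb K x) b * dirichletPdf (gammaIn K epsE Δ epsA) x)
    (B : Finset (Fin K → Bool)) :
    (∑ b ∈ B, νout b) - (∑ b ∈ B, νin b)
      ≤ Real.sqrt (deltaSq K T q) * AdvCVub Δ epsA epsE K := by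
  have hεa₀ : 0 < epsA := (by positivity : 0 ≤ Δ / (1 + Δ)).trans_lt hεa₁
  refine (stmt13_general hK hεe (by linarith) hεa₀ hεa₁ hεa₂ (measurable_dsKernel K T q)
    (fun p _ => dsKernel_mem_stdSimplex K T q p) hνout hνin B).trans ?_
  exact mul_le_mul_of_nonneg_right (dobrushinCoeff_div_two_le_sqrt
    fun p : probSimplex K => dsKernel_mem_stdSimplex K T q p) (Real.sqrt_nonneg _)
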